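/- Let f be a harmonic mapping of the open unit disk U = {z ∈ ℂ : |z| < 1} into the open unit ball Bⁿ = {x ∈ ℝⁿ : |x| < 1}. Then at every point z ∈ U where the function z ↦ |f(z)| is differentiable, the gradient of |f| satisfies |∇|f|(z)| ≤ (4/π) · (1 - |f(z)|²)/(1 - |z|²). -/

import Mathlib

open Complex Metric Real

theorem aux_cos (x : ℝ) (hx : |x| ≤ 1) : Real.cos (π / 2 * x) ≤ 1 - x ^ 2 := by
  wlog h : 0 ≤ x generalizing x
  · have := this (-x) (by simpa using hx) (by linarith)
    simpa using this
  have hx1 : x ≤ 1 := (le_abs_self x).trans hx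
  have hm0 : (0 : ℝ) ∈ Set.Icc 0 π := ⟨le_rfl, Real.pi_pos.le⟩
  have hm1 : π / 4 ∈ Set.Icc 0 π := ⟨by positivity, by linarith [Real.pi_pos]⟩
  have hc := strictConcaveOn_sin_Icc.concaveOn.2 hm0 hm1 (sub_nonneg.2 hx1) h (by ring)
  simp only [smul_eq_mul, Real.sin_zero, mul_zero, zero_add, Real.sin_pi_div_four] at hc
  have h2 : Real.cos (π / 2 * x) = 1 - 2 * Real.sin (x * (π / 4)) ^ 2 := by
    have h4 := Real.cos_two_mul (x * (π / 4))
    have h3 := Real.sin_sq_add_cos_sq (x * (π / 4))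
    rw [show π / 2 * x = 2 * (x * (π / 4)) by ring]
    linarith
  have h5 : (x * (√2 / 2)) ^ 2 ≤ Real.sin (x * (π / 4)) ^ 2 :=
    pow_le_pow_left₀ (by positivity) hc 2
  have h6 : (x * (√2 / 2)) ^ 2 = x ^ 2 / 2 := by
    rw [mul_pow, div_pow, Real.sq_sqrt (by norm_num)]; ring
  linarith

theorem aux_mob (z w : ℂ) (hz : ‖z‖ < 1) (hw : ‖w‖ < 1) :
    1 + (starRingEnd ℂ) z * w ≠ 0 ∧ ‖(w + z) / (1 + (starRingEnd ℂ) z * w)‖ < 1 := by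
  have h1 : ‖1 + (starRingEnd ℂ) z * w‖ ^ 2 - ‖w + z‖ ^ 2 = (1 - ‖z‖ ^ 2) * (1 - ‖w‖ ^ 2) := by
    simp only [← Complex.normSq_eq_norm_sq, Complex.normSq_apply]
    simp
    ring
  have h2 : 0 < (1 - ‖z‖ ^ 2) * (1 - ‖w‖ ^ 2) := by
    have := norm_nonneg z
    have := norm_nonneg w
    apply mul_pos <;> nlinarith
  have h3 : ‖w + z‖ < ‖1 + (starRingEnd ℂ) z * w‖ :=
    lt_of_pow_lt_pow_left₀ 2 (norm_nonneg _) (by linarith)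
  have h4 : 0 < ‖1 + (starRingEnd ℂ) z * w‖ := (norm_nonneg _).trans_lt h3
  exact ⟨norm_pos_iff.1 h4, by rw [norm_div, div_lt_one h4]; exact h3⟩

theorem aux_schwarz_pick (G : ℂ → ℂ) (hG : DifferentiableOn ℂ G (ball 0 1))
    (hm : ∀ w ∈ ball (0 : ℂ) 1, ‖G w‖ < 1) (z : ℂ) (hz : ‖z‖ < 1) :
    ‖deriv G z‖ ≤ (1 - ‖G z‖ ^ 2) / (1 - ‖z‖ ^ 2) := by
  set b := G z with hb
  have hb1 : ‖b‖ < 1 := hm z (by simpa using hz)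
  let φ : ℂ → ℂ → ℂ := fun a w => (w + a) / (1 + (starRingEnd ℂ) a * w)
  have hφ : ∀ a w, ‖a‖ < 1 → ‖w‖ < 1 → HasDerivAt (φ a)
      ((1 * (1 + (starRingEnd ℂ) a * w) - (w + a) * ((starRingEnd ℂ) a * 1)) /
        (1 + (starRingEnd ℂ) a * w) ^ 2) w := by
    intro a w ha hw
    exact ((hasDerivAt_id w).add_const a).div
      (((hasDerivAt_id w).const_mul _).const_add 1) (aux_mob a w ha hw).1
  have hφn : ∀ a w, ‖a‖ < 1 → ‖w‖ < 1 → ‖φ a w‖ < 1 := fun a w ha hw => (aux_mob a w ha hw).2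
  have hnb : ‖-b‖ < 1 := by simpa using hb1
  have hGd : ∀ w, ‖w‖ < 1 → DifferentiableAt ℂ G w := fun w hw =>
    hG.differentiableAt (isOpen_ball.mem_nhds (by simpa using hw))
  have hGn : ∀ w, ‖w‖ < 1 → ‖G w‖ < 1 := fun w hw => hm w (by simpa using hw)
  have hφ0 : φ z 0 = z := by simp [φ]
  let H : ℂ → ℂ := fun w => φ (-b) (G (φ z w))
  have hH : ∀ w, ‖w‖ < 1 → DifferentiableAt ℂ H w := by
    intro w hw
    have h1 := (hφ z w hz hw).differentiableAt
    have h2 := (hGd _ (hφn z w hz hw))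
    have h3 := (hφ (-b) _ hnb (hGn _ (hφn z w hz hw))).differentiableAt
    exact (h3.comp w (h2.comp w h1) :)
  have hH0 : H 0 = 0 := by simp [H, hφ0, ← hb, φ]
  have hS := Complex.norm_deriv_le_one_of_mapsTo_ball (f := H) (c := 0) (R := 1)
    (fun w hw => (hH w (by simpa using hw)).differentiableWithinAt)
    (fun w hw => by
      have hw' : ‖w‖ < 1 := by simpa using hw
      rw [hH0]
      simpa using (hφn (-b) _ hnb (hGn _ (hφn z w hz hw'))).le) one_pos
  have hzz : ‖z‖ ^ 2 < 1 := by have := norm_nonneg z; nlinarith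
  have hbb : ‖b‖ ^ 2 < 1 := by have := norm_nonneg b; nlinarith
  have hbc : (1 : ℂ) - (‖b‖ : ℂ) ^ 2 ≠ 0 := by
    norm_cast; exact (sub_pos.2 hbb).ne'
  have hD : HasDerivAt H ((1 / (1 - (‖b‖ : ℂ) ^ 2)) * (deriv G z * (1 - (‖z‖ : ℂ) ^ 2))) 0 := by
    have h1 := hφ z 0 hz (by simp)
    have h2 := (hGd z hz).hasDerivAt
    rw [← hφ0] at h2
    have h3 := hφ (-b) b hnb hb1
    have h12 := h2.comp 0 h1
    have h4 : G (φ z 0) = b := by rw [hφ0]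
    have h5 := HasDerivAt.comp_of_eq (0 : ℂ) h3 h12 h4.symm
    refine h5.congr_deriv ?_
    have e1 : (starRingEnd ℂ) b * b = (‖b‖ : ℂ) ^ 2 := by
      rw [mul_comm, Complex.mul_conj, Complex.normSq_eq_norm_sq]; simp
    have e2 : z * (starRingEnd ℂ) z = (‖z‖ : ℂ) ^ 2 := by
      rw [Complex.mul_conj, Complex.normSq_eq_norm_sq]; simp
    rw [hφ0]
    simp only [map_neg, neg_mul, e1, mul_zero, add_zero, zero_add, mul_one, one_mul, e2]
    have e3 : (1 + -(‖b‖ : ℂ) ^ 2) = 1 - (‖b‖ : ℂ) ^ 2 := by ring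
    rw [e3]
    field_simp
    ring
  rw [hD.deriv] at hS
  have n1 : ‖(1 : ℂ) - (‖b‖ : ℂ) ^ 2‖ = 1 - ‖b‖ ^ 2 := by
    rw [show (1 : ℂ) - (‖b‖ : ℂ) ^ 2 = ((1 - ‖b‖ ^ 2 : ℝ) : ℂ) by push_cast; ring,
      Complex.norm_real, Real.norm_of_nonneg (by linarith)]
  have n2 : ‖(1 : ℂ) - (‖z‖ : ℂ) ^ 2‖ = 1 - ‖z‖ ^ 2 := by
    rw [show (1 : ℂ) - (‖z‖ : ℂ) ^ 2 = ((1 - ‖z‖ ^ 2 : ℝ) : ℂ) by push_cast; ring,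
      Complex.norm_real, Real.norm_of_nonneg (by linarith)]
  rw [norm_mul, norm_mul, norm_div, n1, n2, norm_one, one_div_mul_eq_div,
    div_le_one (by linarith)] at hS
  rw [le_div_iff₀ (by linarith)]
  exact hS

theorem aux_trig (ζ : ℂ) :
    ‖Complex.cos ζ‖ ^ 2 - ‖Complex.sin ζ‖ ^ 2 = Real.cos (2 * ζ.re) := by
  have h := Real.cosh_sq ζ.im
  rw [Complex.cos_eq ζ, Complex.sin_eq ζ, Real.cos_two_mul']
  simp only [← Complex.normSq_eq_norm_sq, Complex.normSq_apply]
  simp only [← Complex.ofReal_cos, ← Complex.ofReal_sin, ← Complex.ofReal_cosh,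
    ← Complex.ofReal_sinh]
  generalize Real.cos ζ.re = a, Real.sin ζ.re = b, Real.cosh ζ.im = c, Real.sinh ζ.im = d at *
  simp
  linear_combination (a ^ 2 - b ^ 2) * h

theorem aux_strip (F : ℂ → ℂ) (hF : DifferentiableOn ℂ F (ball 0 1))
    (hm : ∀ w ∈ ball (0 : ℂ) 1, |(F w).re| < 1) (z : ℂ) (hz : ‖z‖ < 1) :
    ‖deriv F z‖ ≤ (4 / π) * (1 - (F z).re ^ 2) / (1 - ‖z‖ ^ 2) := by
  have hpi := Real.pi_pos
  let c : ℂ := ((π / 4 : ℝ) : ℂ)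
  have key : ∀ w ∈ ball (0 : ℂ) 1, 0 < ‖Complex.cos (c * F w)‖ ^ 2 - ‖Complex.sin (c * F w)‖ ^ 2 := by
    intro w hw
    rw [aux_trig]
    have := abs_lt.1 (hm w hw)
    have e : 2 * (c * F w).re = π / 2 * (F w).re := by
      simp only [c, Complex.re_ofReal_mul]; ring
    rw [e]
    apply Real.cos_pos_of_mem_Ioo
    constructor <;> nlinarith
  have hcos : ∀ w ∈ ball (0 : ℂ) 1, Complex.cos (c * F w) ≠ 0 := by
    intro w hw h0
    have := key w hw
    rw [h0] at this
    simp at this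
    nlinarith [sq_nonneg ‖Complex.sin (c * F w)‖]
  let G : ℂ → ℂ := fun w => Complex.tan (c * F w)
  have hFd : ∀ w ∈ ball (0 : ℂ) 1, DifferentiableAt ℂ F w := fun w hw =>
    hF.differentiableAt (isOpen_ball.mem_nhds hw)
  have hGd : ∀ w ∈ ball (0 : ℂ) 1, HasDerivAt G
      (1 / Complex.cos (c * F w) ^ 2 * (c * deriv F w)) w := by
    intro w hw
    exact (Complex.hasDerivAt_tan (hcos w hw)).comp w ((hFd w hw).hasDerivAt.const_mul c)
  have hGn : ∀ w ∈ ball (0 : ℂ) 1, ‖G w‖ < 1 := by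
    intro w hw
    have h0 : 0 < ‖Complex.cos (c * F w)‖ := norm_pos_iff.2 (hcos w hw)
    simp only [G, Complex.tan, norm_div]
    rw [div_lt_one h0]
    exact lt_of_pow_lt_pow_left₀ 2 h0.le (by linarith [key w hw])
  have hzb : z ∈ ball (0 : ℂ) 1 := by simpa using hz
  have hSP := aux_schwarz_pick G
    (fun w hw => (hGd w hw).differentiableAt.differentiableWithinAt) hGn z hz
  have h0 : 0 < ‖Complex.cos (c * F z)‖ := norm_pos_iff.2 (hcos z hzb)
  have hzz : 0 < 1 - ‖z‖ ^ 2 := by have := norm_nonneg z; nlinarith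
  have hid := aux_trig (c * F z)
  have e : 2 * (c * F z).re = π / 2 * (F z).re := by
    simp only [c, Complex.re_ofReal_mul]; ring
  rw [e] at hid
  have hG2 : 1 - ‖G z‖ ^ 2 = Real.cos (π / 2 * (F z).re) / ‖Complex.cos (c * F z)‖ ^ 2 := by
    rw [← hid]
    simp only [G, Complex.tan, norm_div]
    field_simp
  have hc : ‖c‖ = π / 4 := by
    simp only [c, Complex.norm_real]; exact Real.norm_of_nonneg (by positivity)
  rw [(hGd z hzb).deriv, hG2, norm_mul, norm_mul, norm_div, norm_pow, norm_one, hc,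
    le_div_iff₀ hzz] at hSP
  have h1 : π / 4 * ‖deriv F z‖ * (1 - ‖z‖ ^ 2) ≤ Real.cos (π / 2 * (F z).re) := by
    have h2 := mul_le_mul_of_nonneg_right hSP (sq_nonneg ‖Complex.cos (c * F z)‖)
    field_simp at h2 ⊢
    linarith
  have h3 := h1.trans (aux_cos _ (hm z hzb).le)
  rw [le_div_iff₀ hzz]
  rw [div_mul_eq_mul_div, le_div_iff₀ hpi]
  linarith

theorem aux_harm (g : ℂ → ℝ) (hs : ContDiffOn ℝ 2 g (ball (0 : ℂ) 1))
    (hh : ∀ z ∈ ball (0 : ℂ) 1,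
      fderiv ℝ (fun w => fderiv ℝ g w 1) z 1
        + fderiv ℝ (fun w => fderiv ℝ g w Complex.I) z Complex.I = 0) :
    ∃ F : ℂ → ℂ, DifferentiableOn ℂ F (ball 0 1) ∧ ∀ z ∈ ball (0 : ℂ) 1, (F z).re = g z := by
  have hc : ∀ z ∈ ball (0 : ℂ) 1, ContDiffAt ℝ 2 g z := fun z hz =>
    hs.contDiffAt (isOpen_ball.mem_nhds hz)
  have hH : InnerProductSpace.HarmonicOnNhd g (ball (0 : ℂ) 1) := by
    intro x hx
    refine ⟨hc x hx, ?_⟩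
    filter_upwards [isOpen_ball.mem_nhds hx] with y hy
    have hd : DifferentiableAt ℝ (fderiv ℝ g) y :=
      ((hc y hy).fderiv_right (m := 1) (by norm_num)).differentiableAt (by norm_num)
    have hv : ∀ v : ℂ, fderiv ℝ (fun w => fderiv ℝ g w v) y v = fderiv ℝ (fderiv ℝ g) y v v := by
      intro v
      rw [fderiv_clm_apply hd (differentiableAt_const v)]
      simp
    have := hh y hy
    rw [hv, hv] at this
    rw [InnerProductSpace.laplacian_eq_iteratedFDeriv_complexPlane]
    simpa [iteratedFDeriv_two_apply] using this
  obtain ⟨F, h1, h2⟩ := hH.exists_analyticOnNhd_ball_re_eq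
  exact ⟨F, h1.differentiableOn, fun z hz => h2 hz⟩

/-- **Schwarz-type gradient bound for the norm of a vector-valued harmonic mapping**
(Kalaj–Vuorinen, Theorem 2). If `f` is a harmonic mapping of the unit disk into
the unit ball of `ℝⁿ`, then wherever `z ↦ |f(z)|` is differentiable,
`|∇|f|(z)| ≤ (4/π) (1 - |f(z)|²)/(1 - |z|²)`. -/
theorem grad_norm_bound_harmonic_map
    (n : ℕ) (f : ℂ → EuclideanSpace ℝ (Fin n))
    (hf_smooth : ContDiffOn ℝ 2 f (ball (0 : ℂ) 1))
    (hf_harm : ∀ i : Fin n, ∀ z ∈ ball (0 : ℂ) 1,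
      fderiv ℝ (fun w => fderiv ℝ (fun u => f u i) w 1) z 1
        + fderiv ℝ (fun w => fderiv ℝ (fun u => f u i) w Complex.I) z Complex.I = 0)
    (hf_range : ∀ z ∈ ball (0 : ℂ) 1, ‖f z‖ < 1) :
    ∀ z ∈ ball (0 : ℂ) 1, DifferentiableAt ℝ (fun w => ‖f w‖) z →
      ‖gradient (fun w => ‖f w‖) z‖ ≤ (4 / π) * (1 - ‖f z‖ ^ 2) / (1 - ‖z‖ ^ 2) := by
  intro z hz hd
  have hz' : ‖z‖ < 1 := by simpa using hz
  have hgrad : ‖gradient (fun w => ‖f w‖) z‖ = ‖fderiv ℝ (fun w => ‖f w‖) z‖ := by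
    simp [gradient]
  rw [hgrad]
  have hex : ∀ i : Fin n, ∃ F : ℂ → ℂ, DifferentiableOn ℂ F (ball 0 1) ∧
      ∀ z ∈ ball (0 : ℂ) 1, (F z).re = f z i := by
    intro i
    refine aux_harm (fun u => f u i) ?_ (hf_harm i)
    exact contDiffOn_euclidean.1 hf_smooth i
  choose Φ hΦ hΦr using hex
  let v : EuclideanSpace ℝ (Fin n) := ‖f z‖⁻¹ • f z
  have hv : ‖v‖ ≤ 1 := by
    simp only [v, norm_smul, norm_inv, norm_norm]
    exact inv_mul_le_one
  have hvz : inner ℝ v (f z) = ‖f z‖ := by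
    simp only [v, real_inner_smul_left, real_inner_self_eq_norm_sq]
    by_cases h : ‖f z‖ = 0
    · simp [h]
    · field_simp
  let F : ℂ → ℂ := fun w => ∑ i, (v i : ℂ) * Φ i w
  have hFd : DifferentiableOn ℂ F (ball 0 1) := by
    apply DifferentiableOn.fun_sum
    intro i _
    exact (hΦ i).const_mul _
  have hFr : ∀ w ∈ ball (0 : ℂ) 1, (F w).re = inner ℝ v (f w) := by
    intro w hw
    simp only [F, Complex.re_sum, Complex.re_ofReal_mul, PiLp.inner_apply]
    refine Finset.sum_congr rfl fun i _ => ?_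
    rw [hΦr i w hw]
    simp [mul_comm]
  have hle : ∀ w, |inner ℝ v (f w)| ≤ ‖f w‖ := fun w =>
    (abs_real_inner_le_norm v (f w)).trans (by nlinarith [norm_nonneg (f w)])
  have hst := aux_strip F hFd
    (fun w hw => by rw [hFr w hw]; exact (hle w).trans_lt (hf_range w hw)) z hz'
  rw [hFr z hz, hvz] at hst
  refine le_trans ?_ hst
  have hFz : DifferentiableAt ℂ F z := hFd.differentiableAt (isOpen_ball.mem_nhds hz)
  have hre : HasFDerivAt (fun w => (F w).re)
      (Complex.reCLM.comp ((fderiv ℂ F z).restrictScalars ℝ)) z :=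
    Complex.reCLM.hasFDerivAt.comp z (hFz.hasFDerivAt.restrictScalars ℝ)
  have hmin : IsLocalMin (fun w => ‖f w‖ - (F w).re) z := by
    filter_upwards [isOpen_ball.mem_nhds hz] with w hw
    rw [hFr w hw, hFr z hz, hvz]
    linarith [(le_abs_self _).trans (hle w)]
  have h0 := hmin.hasFDerivAt_eq_zero (hd.hasFDerivAt.sub hre)
  rw [sub_eq_zero.1 h0]
  refine ContinuousLinearMap.opNorm_le_bound _ (norm_nonneg _) fun x => ?_
  have : ‖((fderiv ℂ F z) x).re‖ ≤ ‖(fderiv ℂ F z) x‖ := Complex.abs_re_le_norm _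
  refine le_trans this ?_
  rw [norm_deriv_eq_norm_fderiv]
  exact (fderiv ℂ F z).le_opNorm x
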